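/- For all integers n ≥ 1, the convolution of the sequence a_n with itself satisfies Σ_{k=0}^{n} a_k·a_{n-k} = a_{n+2} − 2n·a_{n-1}. -/

import Mathlib

/-!
Comparing with the defining recurrence, the claim amounts to `a_{n+2}' = 2(n+1) a_n` for all `n`,
proved by strong induction (`derivative_painleveA`). Differentiating the recurrence for `a_{n+4}`
and using `k ↔ n+2-k` symmetry gives `a_{n+4}' = a_{n+3}'' + 2 ∑ a_k' a_{n+2-k}`. By induction
(and `a_0' = 1`, `a_1' = 0`) this is
`2(n+2) a_{n+1}' + 2 a_{n+2} + 4 ∑_{j ≤ n} (j+1) a_j a_{n-j}`; the same symmetry replaces the weight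
`j+1` by its average `(n+2)/2` (`two_mul_weighted_sum`), and the recurrence for `a_{n+2}`
collapses the result to `2(n+3) a_{n+2}`.
-/

open Polynomial Finset

/-- The polynomials `a_n` from the Hankel determinant representation of the
rational solutions of Painlevé II: `a₀ = x`, `a₁ = 1`,
`a_{n+1} = a_n' + ∑_{k=0}^{n-1} a_k a_{n-1-k}`. -/
noncomputable def painleveA : ℕ → ℝ[X]
  | 0 => X
  | 1 => 1
  | n + 2 => derivative (painleveA (n + 1)) +
      ∑ k ∈ (Finset.range (n + 1)).attach, painleveA k * painleveA (n - k)
  decreasing_by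
  · omega
  · have := Finset.mem_range.mp k.2; omega
  · omega

theorem painleveA_zero : painleveA 0 = X := by rw [painleveA]

theorem painleveA_one : painleveA 1 = 1 := by rw [painleveA]

/-- The defining recurrence, with the `attach` needed for well-founded recursion removed. -/
theorem painleveA_rec (n : ℕ) : painleveA (n + 2) = derivative (painleveA (n + 1)) +
    ∑ k ∈ Finset.range (n + 1), painleveA k * painleveA (n - k) := by
  rw [painleveA, Finset.sum_attach (Finset.range (n + 1))
    (fun k => painleveA k * painleveA (n - k))]

/-- In a self-convolution the weight `j + 1` averages to `(n + 2) / 2`. -/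
theorem two_mul_weighted_sum (a : ℕ → ℝ[X]) (n : ℕ) :
    2 * ∑ j ∈ Finset.range (n + 1), ((j : ℝ[X]) + 1) * (a j * a (n - j)) =
      ((n : ℝ[X]) + 2) * ∑ j ∈ Finset.range (n + 1), a j * a (n - j) := by
  rw [two_mul]
  nth_rewrite 1 [← Finset.sum_range_reflect]
  rw [← Finset.sum_add_distrib, Finset.mul_sum]
  refine Finset.sum_congr rfl fun j hj => ?_
  obtain ⟨m, rfl⟩ := Nat.exists_eq_add_of_le (Nat.lt_succ_iff.mp (Finset.mem_range.mp hj))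
  rw [show j + m + 1 - 1 - j = m by omega, show j + m - m = j by omega,
    show j + m - j = m by omega]
  push_cast
  ring

theorem derivative_self_convolution (a : ℕ → ℝ[X]) (n : ℕ) :
    derivative (∑ k ∈ Finset.range (n + 1), a k * a (n - k)) =
      2 * ∑ k ∈ Finset.range (n + 1), derivative (a k) * a (n - k) := by
  rw [two_mul]
  nth_rewrite 2 [← Finset.sum_range_reflect]
  rw [← Finset.sum_add_distrib, derivative_sum]
  refine Finset.sum_congr rfl fun j hj => ?_
  obtain ⟨m, rfl⟩ := Nat.exists_eq_add_of_le (Nat.lt_succ_iff.mp (Finset.mem_range.mp hj))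
  rw [show j + m + 1 - 1 - j = m by omega, show j + m - m = j by omega,
    show j + m - j = m by omega, derivative_mul]
  ring

/-- Differentiation lowers the index by two; this is the claim with the recurrence substituted. -/
theorem derivative_painleveA (n : ℕ) :
    derivative (painleveA (n + 2)) = 2 * ((n : ℝ[X]) + 1) * painleveA n := by
  induction n using Nat.strong_induction_on with
  | _ n ih =>
    match n, ih with
    | 0, _ =>
      rw [painleveA_rec]
      simp [painleveA_zero, painleveA_one]
      ring
    | 1, ih =>
      rw [painleveA_rec, derivative_add, derivative_self_convolution, ih 0 (by omega)]
      simp [Finset.sum_range_succ, painleveA_zero, painleveA_one]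
      ring
    | n + 2, ih =>
      have hsum : ∑ k ∈ Finset.range (n + 2 + 1),
          derivative (painleveA k) * painleveA (n + 2 - k) = painleveA (n + 2) +
            2 * ∑ j ∈ Finset.range (n + 1),
              ((j : ℝ[X]) + 1) * (painleveA j * painleveA (n - j)) := by
        rw [Finset.sum_range_succ', Finset.sum_range_succ', Finset.mul_sum]
        have h : ∀ j ∈ Finset.range (n + 1),
            derivative (painleveA (j + 1 + 1)) * painleveA (n + 2 - (j + 1 + 1)) =
              2 * (((j : ℝ[X]) + 1) * (painleveA j * painleveA (n - j))) := by
          intro j hj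
          have hj' := Finset.mem_range.mp hj
          rw [ih j (by omega), show n + 2 - (j + 1 + 1) = n - j by omega]
          ring
        rw [Finset.sum_congr rfl h]
        simp [painleveA_zero, painleveA_one]
        ring
      have hd : derivative (2 * (((n + 1 : ℕ) : ℝ[X]) + 1) * painleveA (n + 1)) =
          2 * (((n + 1 : ℕ) : ℝ[X]) + 1) * derivative (painleveA (n + 1)) := by
        simp [derivative_mul]
      rw [painleveA_rec, derivative_add, derivative_self_convolution, hsum,
        ih (n + 1) (by omega), hd, two_mul_weighted_sum, painleveA_rec n]
      push_cast
      ring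

/-- For all integers `n ≥ 1`,
`∑_{k=0}^{n} a_k·a_{n-k} = a_{n+2} − 2n·a_{n-1}`. -/
theorem painleveA_self_convolution (n : ℕ) (hn : 1 ≤ n) :
    ∑ k ∈ Finset.range (n + 1), painleveA k * painleveA (n - k) =
      painleveA (n + 2) - 2 * (n : ℝ[X]) * painleveA (n - 1) := by
  obtain ⟨m, rfl⟩ := Nat.exists_eq_add_of_le' hn
  rw [painleveA_rec, derivative_painleveA, Nat.add_sub_cancel]
  push_cast
  ring
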